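/- Let n ≥ 1 and x, y ∈ ℝ^n, and let e₁ ∈ ℝ^n denote the first standard basis vector. The following are equivalent: (i) there exists a matrix A ∈ ℝ^{n×n} with nonnegative entries, every column summing to 1, A·e₁ = e₁, and A·y = x; (ii) ∑_i x_i = ∑_i y_i and ‖x − t·e₁‖₁ ≤ ‖y − t·e₁‖₁ for all t ∈ ℝ; (iii) ∑_i x_i = ∑_i y_i and ‖x − y₁·e₁‖₁ ≤ ‖y − y₁·e₁‖₁. (This characterizes thermomajorization in the zero-temperature limit with non-degenerate ground energy.) -/

import Mathlib

open Finset

/-- The first standard basis vector of ℝ^n. -/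
def e1 (n : ℕ) (hn : 0 < n) : Fin n → ℝ := fun j => if j = ⟨0, hn⟩ then 1 else 0

/-! A column-stochastic matrix does not increase the `1`-norm, which applied to
`x - t e₁ = A (y - t e₁)` gives (i) ⟹ (ii); and (iii) is the case `t = y₁` of (ii). For (iii) ⟹ (i)
put `u = x - y₁ e₁` and `v = y - y₁ e₁`. Since `v₁ = 0`, the first column of `A` does not affect
`A v`, so it may be chosen to be `e₁`, and the task is to solve `A v = u`. The hypotheses say that
`u⁺` and `u⁻` fall short of `v⁺` and `v⁻` in total mass by the same amount `d ≥ 0`. Let `A` spread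
the mass of `v⁺` in proportion to `u⁺ + d e₁` and that of `v⁻` in proportion to `u⁻ + d e₁`: the two
copies of `d e₁` cancel. -/

open scoped Matrix

section Stochastic

variable {𝕜 m n : Type*} [Fintype m]

lemma forall_col_mem_stdSimplex_iff [Semiring 𝕜] [PartialOrder 𝕜] {A : Matrix m n 𝕜} :
    (∀ j, A.col j ∈ stdSimplex 𝕜 m) ↔ (∀ i j, 0 ≤ A i j) ∧ ∀ j, ∑ i, A i j = 1 :=
  forall_and.trans (and_congr_left' forall_comm)

lemma sum_mulVec_of_sum_col_eq_one [NonAssocSemiring 𝕜] [Fintype n] {A : Matrix m n 𝕜}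
    (hA : ∀ j, ∑ i, A i j = 1) (v : n → 𝕜) : ∑ i, (A *ᵥ v) i = ∑ j, v j := by
  calc ∑ i, (A *ᵥ v) i = ∑ j, ∑ i, A i j * v j := sum_comm
    _ = ∑ j, v j := by simp only [← sum_mul, hA, one_mul]

variable [CommRing 𝕜] [LinearOrder 𝕜] [IsOrderedRing 𝕜] [Fintype n] {A : Matrix m n 𝕜}

lemma sum_abs_mulVec_le (hA : ∀ j, A.col j ∈ stdSimplex 𝕜 m) (v : n → 𝕜) :
    ∑ i, |(A *ᵥ v) i| ≤ ∑ j, |v j| := by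
  obtain ⟨hA_nonneg, hA_sum⟩ := forall_col_mem_stdSimplex_iff.1 hA
  calc ∑ i, |(A *ᵥ v) i| ≤ ∑ i, ∑ j, |A i j * v j| :=
        sum_le_sum fun i _ => abs_sum_le_sum_abs _ _
    _ = ∑ i, (A *ᵥ fun j => |v j|) i := by
        simp only [abs_mul, abs_of_nonneg (hA_nonneg _ _), Matrix.mulVec, dotProduct]
    _ = ∑ j, |v j| := sum_mulVec_of_sum_col_eq_one hA_sum _

lemma sum_abs_mulVec_sub_mul_mulVec_le (hA : ∀ j, A.col j ∈ stdSimplex 𝕜 m) (y f : n → 𝕜)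
    (t : 𝕜) : ∑ i, |(A *ᵥ y) i - t * (A *ᵥ f) i| ≤ ∑ j, |y j - t * f j| := by
  simpa only [Matrix.mulVec_sub, Matrix.mulVec_smul, Pi.sub_apply, Pi.smul_apply, smul_eq_mul]
    using sum_abs_mulVec_le hA (y - t • f)

end Stochastic

section PosPart

variable {𝕜 m n : Type*} [Fintype m] [Fintype n]

lemma sum_posPart_le_of_sum_abs_le [AddCommGroup 𝕜] [LinearOrder 𝕜] [IsOrderedAddMonoid 𝕜]
    {u : m → 𝕜} {v : n → 𝕜} (h_sum : ∑ i, u i = ∑ j, v j) (h_abs : ∑ i, |u i| ≤ ∑ j, |v j|) :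
    ∑ i, (u i)⁺ ≤ ∑ j, (v j)⁺ := by
  refine le_of_nsmul_le_nsmul_right two_ne_zero ?_
  simp only [smul_sum, ← add_abs_eq_two_nsmul_posPart, sum_add_distrib]
  exact add_le_add h_sum.le h_abs

lemma exists_nonneg_sub_eq_of_sum_abs_le [Ring 𝕜] [LinearOrder 𝕜] [IsOrderedRing 𝕜]
    {e u : m → 𝕜} {v : n → 𝕜} (he : e ∈ stdSimplex 𝕜 m) (h_sum : ∑ i, u i = ∑ j, v j)
    (h_abs : ∑ i, |u i| ≤ ∑ j, |v j|) :
    ∃ p q : m → 𝕜, 0 ≤ p ∧ 0 ≤ q ∧ p - q = u ∧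
      ∑ i, p i = ∑ j, (v j)⁺ ∧ ∑ i, q i = ∑ j, (v j)⁻ := by
  obtain ⟨d, hd⟩ : ∃ d, d = ∑ j, (v j)⁺ - ∑ i, (u i)⁺ := ⟨_, rfl⟩
  have hd' : d = ∑ j, (v j)⁻ - ∑ i, (u i)⁻ := by
    rw [hd, sub_eq_sub_iff_sub_eq_sub]
    simpa only [← sum_sub_distrib, posPart_sub_negPart] using h_sum.symm
  have d_nonneg : 0 ≤ d := hd ▸ sub_nonneg.2 (sum_posPart_le_of_sum_abs_le h_sum h_abs)
  have de_nonneg : 0 ≤ d • e := smul_nonneg d_nonneg he.1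
  have sum_de : ∑ i, (d • e) i = d := by
    simp only [Pi.smul_apply, smul_eq_mul, ← mul_sum, he.2, mul_one]
  refine ⟨u⁺ + d • e, u⁻ + d • e, add_nonneg (posPart_nonneg u) de_nonneg,
    add_nonneg (negPart_nonneg u) de_nonneg, ?_, ?_, ?_⟩
  · rw [add_sub_add_right_eq_sub, posPart_sub_negPart]
  · simp only [Pi.add_apply, sum_add_distrib, sum_de, Pi.posPart_apply]
    rw [hd, add_sub_cancel]
  · simp only [Pi.add_apply, sum_add_distrib, sum_de, Pi.negPart_apply]
    rw [hd', add_sub_cancel]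

end PosPart

section SignMatrix

variable {𝕜 m n : Type*} [CommRing 𝕜] [LinearOrder 𝕜] {v : n → 𝕜} {a b e : m → 𝕜}

/-- The matrix whose `j`-th column is `a`, `b` or `e` according to whether `v j` is positive,
negative or zero. It sends the positive part of `v` to a multiple of `a` and the negative part to a
multiple of `b`, while the columns equal to `e` do not contribute to the image of `v`. -/
def signMatrix (v : n → 𝕜) (a b e : m → 𝕜) : Matrix m n 𝕜 :=
  Matrix.of fun i j => if 0 < v j then a i else if v j < 0 then b i else e i

lemma col_signMatrix_mem_stdSimplex [Fintype m] (ha : a ∈ stdSimplex 𝕜 m)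
    (hb : b ∈ stdSimplex 𝕜 m) (he : e ∈ stdSimplex 𝕜 m) (j : n) :
    (signMatrix v a b e).col j ∈ stdSimplex 𝕜 m := by
  have h_col : (signMatrix v a b e).col j = if 0 < v j then a else if v j < 0 then b else e := by
    ext i
    simp only [signMatrix, Matrix.col_apply, Matrix.of_apply, ite_apply]
  rw [h_col]
  split_ifs <;> assumption

lemma col_signMatrix_of_eq_zero {j : n} (hj : v j = 0) : (signMatrix v a b e).col j = e := by
  ext i
  simp [signMatrix, hj]

lemma signMatrix_mulVec [IsOrderedRing 𝕜] [Fintype n] (v : n → 𝕜) (a b e : m → 𝕜) :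
    signMatrix v a b e *ᵥ v = (∑ j, (v j)⁺) • a - (∑ j, (v j)⁻) • b := by
  have h_entry (i : m) (j : n) :
      signMatrix v a b e i j * v j = (v j)⁺ * a i - (v j)⁻ * b i := by
    rcases lt_trichotomy (v j) 0 with hj | hj | hj
    · simp [signMatrix, hj, hj.not_gt, hj.le, mul_comm]
    · simp [signMatrix, hj]
    · simp [signMatrix, hj, hj.le, mul_comm]
  ext i
  simp only [Matrix.mulVec, dotProduct, h_entry, sum_sub_distrib, ← sum_mul, Pi.sub_apply,
    Pi.smul_apply, smul_eq_mul]

end SignMatrix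

section RelativeMajorization

variable {𝕜 m n : Type*} [Field 𝕜] [LinearOrder 𝕜] [IsStrictOrderedRing 𝕜] [Fintype m]
  {e p : m → 𝕜}

lemma exists_mem_stdSimplex_sum_smul_eq (he : e ∈ stdSimplex 𝕜 m) (hp : 0 ≤ p) :
    ∃ a ∈ stdSimplex 𝕜 m, (∑ i, p i) • a = p := by
  by_cases h_sum : ∑ i, p i = 0
  · have p_eq_zero : p = 0 := (Fintype.sum_eq_zero_iff_of_nonneg hp).1 h_sum
    exact ⟨e, he, by rw [h_sum, p_eq_zero, zero_smul]⟩
  · refine ⟨(∑ i, p i)⁻¹ • p, ⟨smul_nonneg (inv_nonneg.2 (sum_nonneg fun i _ => hp i)) hp, ?_⟩,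
      smul_inv_smul₀ h_sum p⟩
    simp only [Pi.smul_apply, smul_eq_mul, ← mul_sum, inv_mul_cancel₀ h_sum]

variable [Fintype n]

lemma exists_col_mem_stdSimplex_mulVec_eq_of_sum_abs_le {u : m → 𝕜} {v : n → 𝕜}
    (he : e ∈ stdSimplex 𝕜 m) (h_sum : ∑ i, u i = ∑ j, v j) (h_abs : ∑ i, |u i| ≤ ∑ j, |v j|) :
    ∃ A : Matrix m n 𝕜, (∀ j, A.col j ∈ stdSimplex 𝕜 m) ∧ (∀ j, v j = 0 → A.col j = e) ∧
      A *ᵥ v = u := by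
  obtain ⟨p, q, p_nonneg, q_nonneg, rfl, p_sum, q_sum⟩ :=
    exists_nonneg_sub_eq_of_sum_abs_le he h_sum h_abs
  obtain ⟨a, ha, hap⟩ := exists_mem_stdSimplex_sum_smul_eq he p_nonneg
  obtain ⟨b, hb, hbq⟩ := exists_mem_stdSimplex_sum_smul_eq he q_nonneg
  refine ⟨signMatrix v a b e, col_signMatrix_mem_stdSimplex ha hb he,
    fun _ => col_signMatrix_of_eq_zero, ?_⟩
  rw [signMatrix_mulVec, ← p_sum, ← q_sum, hap, hbq]

lemma exists_col_mem_stdSimplex_mulVec_single_eq_of_sum_abs_le [DecidableEq n]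
    (he : e ∈ stdSimplex 𝕜 m) {x : m → 𝕜} {y : n → 𝕜} {z : n} (h_sum : ∑ i, x i = ∑ j, y j)
    (h_abs : ∑ i, |x i - y z * e i| ≤ ∑ j, |y j - y z * (Pi.single z 1 : n → 𝕜) j|) :
    ∃ A : Matrix m n 𝕜, (∀ j, A.col j ∈ stdSimplex 𝕜 m) ∧ A *ᵥ Pi.single z 1 = e ∧
      A *ᵥ y = x := by
  obtain ⟨A, hA, hA_col, hAv⟩ := exists_col_mem_stdSimplex_mulVec_eq_of_sum_abs_le
    (u := x - y z • e) (v := y - y z • Pi.single z 1) he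
    (by simp [sum_sub_distrib, ← mul_sum, h_sum, he.2]) h_abs
  have hAz : A *ᵥ Pi.single z 1 = e := by
    rw [Matrix.mulVec_single_one]
    exact hA_col z (by simp)
  refine ⟨A, hA, hAz, ?_⟩
  rwa [Matrix.mulVec_sub, Matrix.mulVec_smul, hAz, sub_left_inj] at hAv

theorem stmt16_general [DecidableEq n] (he : e ∈ stdSimplex 𝕜 m) (x : m → 𝕜) (y : n → 𝕜) (z : n) :
    List.TFAE [
      ∃ A : Matrix m n 𝕜, (∀ i j, 0 ≤ A i j) ∧ (∀ j, ∑ i, A i j = 1) ∧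
        A *ᵥ Pi.single z 1 = e ∧ A *ᵥ y = x,
      ∑ i, x i = ∑ j, y j ∧
        ∀ t : 𝕜, ∑ i, |x i - t * e i| ≤ ∑ j, |y j - t * (Pi.single z 1 : n → 𝕜) j|,
      ∑ i, x i = ∑ j, y j ∧
        ∑ i, |x i - y z * e i| ≤ ∑ j, |y j - y z * (Pi.single z 1 : n → 𝕜) j|] := by
  tfae_have 1 → 2 := by
    rintro ⟨A, hA_nonneg, hA_sum, rfl, rfl⟩
    exact ⟨sum_mulVec_of_sum_col_eq_one hA_sum y, sum_abs_mulVec_sub_mul_mulVec_le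
      (forall_col_mem_stdSimplex_iff.2 ⟨hA_nonneg, hA_sum⟩) y (Pi.single z 1)⟩
  tfae_have 2 → 3 := And.imp_right fun h_abs => h_abs (y z)
  tfae_have 3 → 1 := by
    rintro ⟨h_sum, h_abs⟩
    obtain ⟨A, hA, hAz, hAy⟩ :=
      exists_col_mem_stdSimplex_mulVec_single_eq_of_sum_abs_le he h_sum h_abs
    obtain ⟨hA_nonneg, hA_sum⟩ := forall_col_mem_stdSimplex_iff.1 hA
    exact ⟨A, hA_nonneg, hA_sum, hAz, hAy⟩
  tfae_finish

end RelativeMajorization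

lemma e1_eq_single (n : ℕ) (hn : 0 < n) : e1 n hn = Pi.single ⟨0, hn⟩ 1 := by
  ext j
  rw [e1, Pi.single_apply]

/-- Characterization of thermomajorization in the zero-temperature limit with
non-degenerate ground energy. -/
theorem stmt16 (n : ℕ) (hn : 0 < n) (x y : Fin n → ℝ) :
    ((∃ A : Matrix (Fin n) (Fin n) ℝ, (∀ i j, 0 ≤ A i j) ∧
        (∀ j, ∑ i, A i j = 1) ∧ A.mulVec (e1 n hn) = e1 n hn ∧ A.mulVec y = x) ↔
      (∑ i, x i = ∑ i, y i) ∧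
        ∀ t : ℝ, ∑ i, |x i - t * e1 n hn i| ≤ ∑ i, |y i - t * e1 n hn i|) ∧
    (((∑ i, x i = ∑ i, y i) ∧
        ∀ t : ℝ, ∑ i, |x i - t * e1 n hn i| ≤ ∑ i, |y i - t * e1 n hn i|) ↔
      (∑ i, x i = ∑ i, y i) ∧
        ∑ i, |x i - y ⟨0, hn⟩ * e1 n hn i| ≤ ∑ i, |y i - y ⟨0, hn⟩ * e1 n hn i|) := by
  rw [e1_eq_single]
  have h := stmt16_general (single_mem_stdSimplex ℝ ⟨0, hn⟩) x y ⟨0, hn⟩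
  exact ⟨h.out 0 1, h.out 1 2⟩
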